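/- Let d ∈ ℤ[X] be a monic polynomial of degree 4 that is not squarefree. Then d is Pellian over ℤ[X] if and only if there exist ε ∈ {1, −1} and c ∈ ℤ such that the polynomial d(εX + c) is one of X²(X²+1), X²(X²−1), X²(X²+2), X²(X²−2), X²(X²−2X−1). -/

import Mathlib

/-!
If `d` were a square `p²`, then `f ± pg` would be units, forcing `g = 0`; so after a translation
`d = X²D` with `D = X² + aX + b`. A solution of the Pell equation for `d` is an element
`z = f + Xg√D` of norm `1` in `ℤ[X][√D]` whose `√D`-component is nonzero and vanishes at `0`.

The element `u = D' + 2√D` has constant norm `Δ = a² - 4b`, and if `z` has nonzero constant norm and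
nonzero `√D`-component, then multiplying it by `u` or by the conjugate of `u` lowers the degree of
that component. By descent `z` is, up to scalars and conjugation, a power `uⁿ⁺¹`. Comparing leading
coefficients and norms gives `s²Δⁿ⁺¹ = 2⁴ⁿ⁺²` for an integer `s`, so `Δ ∣ 8`. At a point where
`D ≥ 0` and `D' ≠ 0`, the product of the two components of `uⁿ⁺¹` has the sign of `D'`, so neither
vanishes; at the point `0` this means that `b < 0` or `a = 0`. These two constraints leave only the
polynomials listed, for which there are explicit solutions.
-/

open Polynomial

section IsPellian

variable {R : Type*} [CommRing R]

/-- `d` is Pellian over `R[X]`: the Pell equation `f² - dg² = 1` has a solution with `g ≠ 0`. -/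
def IsPellian (d : R[X]) : Prop :=
  ∃ f g : R[X], g ≠ 0 ∧ f ^ 2 - d * g ^ 2 = 1

variable [IsDomain R] {d p : R[X]}

lemma IsPellian.comp (hd : IsPellian d) (hp : p.natDegree ≠ 0) : IsPellian (d.comp p) := by
  obtain ⟨f, g, hg, hfg⟩ := hd
  refine ⟨f.comp p, g.comp p, fun h => ?_, by simpa using congrArg (·.comp p) hfg⟩
  rcases comp_eq_zero_iff.mp h with h | ⟨-, h⟩
  · exact hg h
  · exact hp (h ▸ natDegree_C _)

lemma IsPellian.comp_C_mul_X_add_C (hd : IsPellian d) {ε : R} (hε : ε ≠ 0) (c : R) :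
    IsPellian (d.comp (C ε * X + C c)) :=
  hd.comp (by rw [natDegree_linear hε]; exact one_ne_zero)

lemma isPellian_comp_C_mul_X_add_C_iff {ε : R} (hε : IsUnit ε) (c : R) :
    IsPellian (d.comp (C ε * X + C c)) ↔ IsPellian d := by
  refine ⟨fun h => ?_, fun h => h.comp_C_mul_X_add_C hε.ne_zero c⟩
  obtain ⟨δ, hδ⟩ := hε.exists_right_inv
  have hinv : (C ε * X + C c).comp (C δ * X + C (-(δ * c))) = X := by
    have hC : (C ε * C δ : R[X]) = 1 := by rw [← C_mul, hδ, C_1]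
    simp only [add_comp, mul_comp, C_comp, X_comp, C_neg, C_mul]
    linear_combination (X - C c) * hC
  have hcomp := h.comp_C_mul_X_add_C (right_ne_zero_of_mul_eq_one hδ) (-(δ * c))
  rwa [comp_assoc, hinv, comp_X] at hcomp

lemma natDegree_eq_zero_of_isUnit_sq_sub_sq [NeZero (2 : R)] {f h : R[X]}
    (hfh : IsUnit (f ^ 2 - h ^ 2)) : h.natDegree = 0 := by
  rw [sq_sub_sq, IsUnit.mul_iff] at hfh
  have hdiff : C 2 * h = (f + h) - (f - h) := by rw [C_ofNat]; ring
  have hle := natDegree_sub_le (f + h) (f - h)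
  rwa [← hdiff, natDegree_C_mul two_ne_zero, natDegree_eq_zero_of_isUnit hfh.1,
    natDegree_eq_zero_of_isUnit hfh.2, max_self, Nat.le_zero] at hle

lemma IsPellian.not_isSquare [NeZero (2 : R)] (hd : IsPellian d) (hdeg : d.natDegree ≠ 0) :
    ¬ IsSquare d := by
  rintro ⟨p, rfl⟩
  obtain ⟨f, g, hg, hfg⟩ := hd
  have hunit : IsUnit (f ^ 2 - (p * g) ^ 2) := by
    rw [mul_pow, sq p, hfg]
    exact isUnit_one
  have hp : p ≠ 0 := by
    rintro rfl
    simp at hdeg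
  have hpg := natDegree_eq_zero_of_isUnit_sq_sub_sq hunit
  rw [natDegree_mul hp hg] at hpg
  rw [natDegree_mul hp hp] at hdeg
  omega

end IsPellian

section MonicQuadratic

variable {R : Type*} [CommRing R]

/-- The monic quadratic polynomial `X² + aX + b`: the factor left over once a square `X²` is split
off a quartic. -/
noncomputable def monicQuadratic (a b : R) : R[X] :=
  X ^ 2 + C a * X + C b

lemma exists_eq_monicQuadratic {q : R[X]} (hq : q.Monic) (hdeg : q.natDegree = 2) :
    ∃ a b, q = monicQuadratic a b := by
  refine ⟨q.coeff 1, q.coeff 0, ?_⟩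
  have hlead : q.coeff 2 = 1 := hdeg ▸ hq
  have hquad := eq_quadratic_of_degree_le_two (natDegree_le_iff_degree_le.mp hdeg.le)
  rwa [hlead, C_1, one_mul] at hquad

lemma exists_monic_sq_mul_of_not_squarefree [IsDomain R] {d : R[X]} (hd : d.Monic)
    (hsq : ¬ Squarefree d) :
    ∃ p q : R[X], p.Monic ∧ q.Monic ∧ p.natDegree ≠ 0 ∧ d = p ^ 2 * q := by
  simp only [Squarefree, not_forall] at hsq
  obtain ⟨p, ⟨q, rfl⟩, hp⟩ := hsq
  obtain ⟨u, hu⟩ := hd.isUnit_leadingCoeff_of_dvd (dvd_mul_of_dvd_left (dvd_mul_right p p) q)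
  have hmonic : (C (↑u⁻¹ : R) * p).Monic :=
    monic_C_mul_of_mul_leadingCoeff_eq_one (by rw [← hu, Units.inv_mul])
  have hfactor : p * p * q = (C (↑u⁻¹ : R) * p) ^ 2 * (C (↑u : R) ^ 2 * q) := by
    have hC : (C (↑u⁻¹ : R) * C (↑u : R)) = 1 := by rw [← C_mul, Units.inv_mul, C_1]
    linear_combination (-(p ^ 2 * q) * (C (↑u⁻¹ : R) * C (↑u : R) + 1)) * hC
  refine ⟨_, _, hmonic, (hmonic.pow 2).of_mul_monic_left (hfactor ▸ hd), fun hdeg => hp ?_,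
    hfactor⟩
  rw [hmonic.natDegree_eq_zero] at hdeg
  exact IsUnit.of_mul_eq_one_right _ hdeg

lemma exists_comp_eq_X_sq_mul_monicQuadratic [IsDomain R] {d : R[X]} (hmonic : d.Monic)
    (hdeg : d.natDegree = 4) (hnsf : ¬ Squarefree d) (hsq : ¬ IsSquare d) :
    ∃ r a b : R, d.comp (X + C r) = X ^ 2 * monicQuadratic a b := by
  obtain ⟨p, q, hp, hq, hp0, rfl⟩ := exists_monic_sq_mul_of_not_squarefree hmonic hnsf
  rw [(hp.pow 2).natDegree_mul hq, hp.natDegree_pow] at hdeg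
  have hq0 : q.natDegree ≠ 0 := by
    intro h
    rw [hq.natDegree_eq_zero.mp h, mul_one] at hsq
    exact hsq (IsSquare.sq p)
  have hp1 : p = X + C (p.coeff 0) := hp.eq_X_add_C (by omega)
  obtain ⟨a, b, hab⟩ := exists_eq_monicQuadratic (hq.comp_X_add_C (-p.coeff 0))
    (by rw [natDegree_comp, natDegree_X_add_C]; omega)
  refine ⟨-p.coeff 0, a, b, ?_⟩
  have hcomp : p.comp (X + C (-p.coeff 0)) = X := by
    nth_rw 1 [hp1]
    rw [add_comp, X_comp, C_comp, C_neg, neg_add_cancel_right]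
  rw [mul_comp, pow_comp, hab, hcomp]

namespace monicQuadratic

/-- The ring `R[X][√D]` for `D = X² + aX + b`: the pair `⟨f, g⟩` stands for `f + g√D`, and its norm
is `f² - Dg²`. -/
abbrev Extension (a b : R) : Type _ :=
  QuadraticAlgebra R[X] (monicQuadratic a b) 0

/-- The element `D' + 2√D` of `R[X][√D]`. Its norm `D'² - 4D` is the discriminant `a² - 4b`, a
constant, and every element of nonzero constant norm is a power of it up to scalars and
conjugation. -/
noncomputable def fundamental (a b : R) : Extension a b :=
  ⟨2 * X + C a, 2⟩

variable {a b c : R}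

open QuadraticAlgebra (re_mul im_mul re_smul im_smul re_star im_star norm_def
  algebraMap_norm_eq_mul_star)

lemma norm_smul_eq (k : R) (z : Extension a b) : (k • z).norm = C (k ^ 2) * z.norm := by
  rw [norm_def, norm_def]
  simp only [re_smul, im_smul, smul_eq_C_mul, C_pow]
  ring

lemma norm_fundamental (a b : R) : (fundamental a b).norm = C (a ^ 2 - 4 * b) := by
  rw [norm_def]
  simp only [fundamental, monicQuadratic, C_sub, C_mul, C_pow, C_ofNat]
  ring

lemma fundamental_mul_star (a b : R) :
    fundamental a b * star (fundamental a b) = algebraMap R _ (a ^ 2 - 4 * b) := by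
  rw [← algebraMap_norm_eq_mul_star, norm_fundamental]
  rfl

lemma re_mul_fundamental (z : Extension a b) :
    (z * fundamental a b).re = z.re * (2 * X + C a) + z.im * (2 * monicQuadratic a b) := by
  rw [re_mul, fundamental]
  ring

lemma im_mul_fundamental (z : Extension a b) :
    (z * fundamental a b).im = z.re * 2 + z.im * (2 * X + C a) := by
  rw [im_mul, fundamental]
  ring

lemma im_mul_star_fundamental (z : Extension a b) :
    (z * star (fundamental a b)).im = z.im * (2 * X + C a) - z.re * 2 := by
  rw [im_mul, re_star, im_star, fundamental]
  ring

lemma im_mul_fundamental_mul_im_mul_star (z : Extension a b) :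
    (z * fundamental a b).im * (z * star (fundamental a b)).im =
      C (a ^ 2 - 4 * b) * z.im ^ 2 - 4 * z.norm := by
  rw [im_mul_fundamental, im_mul_star_fundamental, norm_def]
  simp only [monicQuadratic, C_sub, C_mul, C_pow, C_ofNat]
  ring

lemma fundamental_pow_succ_leading (a b : R) (n : ℕ) :
    ((fundamental a b ^ (n + 1)).re.natDegree ≤ n + 1 ∧
      (fundamental a b ^ (n + 1)).re.coeff (n + 1) = 2 ^ (2 * n + 1)) ∧
    ((fundamental a b ^ (n + 1)).im.natDegree ≤ n ∧
      (fundamental a b ^ (n + 1)).im.coeff n = 2 ^ (2 * n + 1)) := by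
  have hL : (2 * X + C a : R[X]).natDegree ≤ 1 := by compute_degree
  have hL_coeff : (2 * X + C a : R[X]).coeff 1 = 2 := by simp
  have hD : (2 * monicQuadratic a b).natDegree ≤ 2 := by
    rw [monicQuadratic]
    compute_degree
  have hD_coeff : (2 * monicQuadratic a b).coeff 2 = 2 := by simp [monicQuadratic]
  induction n with
  | zero => simpa [fundamental] using hL
  | succ n ih =>
    rw [pow_succ, re_mul_fundamental, im_mul_fundamental]
    generalize fundamental a b ^ (n + 1) = w at ih ⊢
    obtain ⟨⟨hre, hre_coeff⟩, him, him_coeff⟩ := ih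
    refine ⟨⟨?_, ?_⟩, ?_, ?_⟩
    · exact natDegree_add_le_of_degree_le (natDegree_mul_le_of_le hre hL)
        ((natDegree_mul_le_of_le him hD).trans_eq (by ring))
    · rw [coeff_add, coeff_mul_add_eq_of_natDegree_le hre hL,
        coeff_mul_add_eq_of_natDegree_le him hD, hre_coeff, him_coeff, hL_coeff, hD_coeff]
      ring
    · exact natDegree_add_le_of_degree_le
        ((natDegree_mul_le_of_le hre (natDegree_ofNat 2).le).trans_eq (by ring))
        (natDegree_mul_le_of_le him hL)
    · rw [coeff_add, coeff_mul_ofNat, coeff_mul_add_eq_of_natDegree_le him hL, hre_coeff,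
        him_coeff, hL_coeff]
      ring

section IsDomain

variable [IsDomain R]

lemma eq_algebraMap_of_im_eq_zero {z : Extension a b} (hz : z.norm = C c) (him : z.im = 0) :
    ∃ l : R, z = algebraMap R _ l := by
  have hsq : z.re ^ 2 = C c := by
    rw [← hz, norm_def, him]
    ring
  have hdeg : z.re.natDegree = 0 := by simpa using congrArg natDegree hsq
  exact ⟨z.re.coeff 0, QuadraticAlgebra.ext (eq_C_of_natDegree_eq_zero hdeg) him⟩

variable [NeZero (2 : R)]

lemma natDegree_im_lt_max {z : Extension a b} (hz : z.im ≠ 0) :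
    z.im.natDegree <
      max (z * fundamental a b).im.natDegree (z * star (fundamental a b)).im.natDegree := by
  have hsum : (z * fundamental a b).im + (z * star (fundamental a b)).im =
      C 2 * ((C 2 * X + C a) * z.im) := by
    rw [im_mul_fundamental, im_mul_star_fundamental, C_ofNat]
    ring
  have hL : (C (2 : R) * X + C a).natDegree = 1 := natDegree_linear two_ne_zero
  have hle := natDegree_add_le (z * fundamental a b).im (z * star (fundamental a b)).im
  rw [hsum, natDegree_C_mul two_ne_zero, natDegree_mul (ne_zero_of_natDegree_gt (hL ▸ one_pos)) hz,
    hL] at hle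
  omega

lemma discr_ne_zero_of_norm_eq_C {z : Extension a b} (hz : z.norm = C c) (hc : c ≠ 0)
    (him : z.im ≠ 0) : a ^ 2 - 4 * b ≠ 0 := by
  intro hΔ
  have hprod : (z * fundamental a b).im * (z * star (fundamental a b)).im = C (-(2 ^ 2 * c)) := by
    rw [im_mul_fundamental_mul_im_mul_star, hΔ, hz]
    simp only [C_0, zero_mul, C_neg, C_mul, C_pow, C_ofNat]
    ring
  have hne : (C (-(2 ^ 2 * c)) : R[X]) ≠ 0 := by simpa [hc] using two_ne_zero
  have hdeg := congrArg natDegree hprod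
  rw [natDegree_mul (left_ne_zero_of_mul (hprod ▸ hne)) (right_ne_zero_of_mul (hprod ▸ hne)),
    natDegree_C] at hdeg
  have := natDegree_im_lt_max him
  omega

lemma degree_im_mul_lt {z : Extension a b} (hz : z.norm = C c) (him : z.im ≠ 0) :
    (z * fundamental a b).im.degree < z.im.degree ∨
      (z * star (fundamental a b)).im.degree < z.im.degree := by
  by_contra! ⟨hS, hT⟩
  have hprod := congrArg natDegree (im_mul_fundamental_mul_im_mul_star z)
  have hle : (C (a ^ 2 - 4 * b) * z.im ^ 2 - 4 * z.norm).natDegree ≤ 2 * z.im.natDegree := by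
    rw [hz, ← C_ofNat, ← C_mul, natDegree_sub_C, ← natDegree_pow]
    exact natDegree_C_mul_le _ _
  rw [← hprod, natDegree_mul (fun h => by simp_all) (fun h => by simp_all)] at hle
  have hmax := natDegree_im_lt_max him
  have := natDegree_le_natDegree hS
  have := natDegree_le_natDegree hT
  omega

-- Multiplying `w = z * star (fundamental a b)` by the fundamental element gives a scalar multiple
-- of `z` and so raises the degree again; hence it is the other product of `w` that has smaller
-- degree, and the descent can continue in the same direction.
lemma exists_smul_eq_smul_pow {z : Extension a b} (hz : z.norm = C c) (hc : c ≠ 0)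
    (hlt : z.im ≠ 0 → (z * star (fundamental a b)).im.degree < z.im.degree) :
    ∃ (k l : R) (n : ℕ), k ≠ 0 ∧ k • z = l • fundamental a b ^ n := by
  induction hdeg : z.im.degree using WellFoundedLT.induction generalizing z c with
  | _ d ih =>
    subst hdeg
    by_cases him : z.im = 0
    · obtain ⟨l, rfl⟩ := eq_algebraMap_of_im_eq_zero hz him
      exact ⟨1, l, 0, one_ne_zero, by simp [Algebra.algebraMap_eq_smul_one]⟩
    have hΔ := discr_ne_zero_of_norm_eq_C hz hc him
    have hmul : z * star (fundamental a b) * fundamental a b = (a ^ 2 - 4 * b) • z := by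
      rw [mul_assoc, mul_comm (star _), fundamental_mul_star, mul_comm, ← Algebra.smul_def]
    have hnorm : (z * star (fundamental a b)).norm = C (c * (a ^ 2 - 4 * b)) := by
      rw [map_mul, hz, QuadraticAlgebra.norm_star, norm_fundamental, C_mul]
    have hnot_lt : ¬ (z * star (fundamental a b) * fundamental a b).im.degree <
        (z * star (fundamental a b)).im.degree := by
      rw [hmul, im_smul, smul_eq_C_mul, degree_C_mul hΔ]
      exact (hlt him).not_gt
    obtain ⟨k, l, n, hk, h⟩ := ih _ (hlt him) hnorm (mul_ne_zero hc hΔ)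
      (fun hw => (degree_im_mul_lt hnorm hw).resolve_left hnot_lt) rfl
    refine ⟨k * (a ^ 2 - 4 * b), l, n + 1, mul_ne_zero hk hΔ, ?_⟩
    rw [mul_smul, ← hmul, ← smul_mul_assoc, h, smul_mul_assoc, pow_succ]

theorem exists_smul_eq_smul_pow_or_star {z : Extension a b} (hz : z.norm = C c) (hc : c ≠ 0) :
    ∃ (k l : R) (n : ℕ), k ≠ 0 ∧
      (k • z = l • fundamental a b ^ n ∨ k • star z = l • fundamental a b ^ n) := by
  by_cases hlt : z.im ≠ 0 → (z * star (fundamental a b)).im.degree < z.im.degree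
  · obtain ⟨k, l, n, hk, h⟩ := exists_smul_eq_smul_pow hz hc hlt
    exact ⟨k, l, n, hk, .inl h⟩
  · push Not at hlt
    obtain ⟨him, hle⟩ := hlt
    have hstar : (star z * star (fundamental a b)).im.degree < (star z).im.degree := by
      rw [mul_comm, ← star_mul, im_star, im_star, degree_neg, degree_neg]
      exact (degree_im_mul_lt hz him).resolve_right hle.not_gt
    obtain ⟨k, l, n, hk, h⟩ := exists_smul_eq_smul_pow
      ((QuadraticAlgebra.norm_star z).trans hz) hc fun _ => hstar
    exact ⟨k, l, n, hk, .inr h⟩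

lemma exists_smul_im_eq_smul_im_pow {z : Extension a b} (hz : z.norm = C c) (hc : c ≠ 0)
    (him : z.im ≠ 0) :
    ∃ (k l : R) (n : ℕ), k ≠ 0 ∧ l ≠ 0 ∧ k • z.im = l • (fundamental a b ^ (n + 1)).im ∧
      k ^ 2 * c = l ^ 2 * (a ^ 2 - 4 * b) ^ (n + 1) := by
  obtain ⟨k, l, n, hk, h⟩ := exists_smul_eq_smul_pow_or_star hz hc
  wlog hz' : k • z = l • fundamental a b ^ n generalizing z l
  · have hstar := h.resolve_left hz'
    obtain ⟨k, l, n, hk, hl, him', hnorm⟩ := this (z := star z)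
      ((QuadraticAlgebra.norm_star z).trans hz) (neg_ne_zero.mpr him) l (.inl hstar) hstar
    refine ⟨k, -l, n, hk, neg_ne_zero.mpr hl, ?_, by rw [neg_sq, hnorm]⟩
    rw [neg_smul, ← him', im_star, smul_neg, neg_neg]
  have hnorm : k ^ 2 * c = l ^ 2 * (a ^ 2 - 4 * b) ^ n := by
    have hnorm' := congrArg QuadraticAlgebra.norm hz'
    rw [norm_smul_eq, norm_smul_eq, hz, map_pow QuadraticAlgebra.norm,
      norm_fundamental, ← C_pow, ← C_mul, ← C_mul] at hnorm'
    exact C_injective hnorm'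
  have hl : l ≠ 0 := by
    rintro rfl
    simp [hk, hc] at hnorm
  have him' := congrArg QuadraticAlgebra.im hz'
  rw [im_smul, im_smul] at him'
  obtain _ | n := n
  · rw [pow_zero, QuadraticAlgebra.im_one, smul_zero] at him'
    exact absurd him' (smul_ne_zero hk him)
  · exact ⟨k, l, n, hk, hl, him', hnorm⟩

theorem exists_sq_mul_discr_pow_eq {z : Extension a b} (hz : z.norm = C c) (hc : c ≠ 0)
    (him : z.im ≠ 0) :
    ∃ (n : ℕ) (s : R), s ^ 2 * (a ^ 2 - 4 * b) ^ (n + 1) = 2 ^ (4 * n + 2) * c := by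
  obtain ⟨k, l, n, hk, -, hkl, hnorm⟩ := exists_smul_im_eq_smul_im_pow hz hc him
  have hcoeff : k * z.im.coeff n = l * 2 ^ (2 * n + 1) := by
    simpa [(fundamental_pow_succ_leading a b n).2.2] using congrArg (coeff · n) hkl
  refine ⟨n, z.im.coeff n, mul_left_cancel₀ (pow_ne_zero 2 hk) ?_⟩
  linear_combination (a ^ 2 - 4 * b) ^ (n + 1) * (k * z.im.coeff n + l * 2 ^ (2 * n + 1)) * hcoeff -
    2 ^ (4 * n + 2) * hnorm

end IsDomain

variable [LinearOrder R] [IsStrictOrderedRing R]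

lemma eval_fundamental_pow_pos {x : R} (hD : 0 ≤ (monicQuadratic a b).eval x)
    (hL : 2 * x + a ≠ 0) (n : ℕ) :
    0 < (2 * x + a) * ((fundamental a b ^ (n + 1)).re.eval x *
      (fundamental a b ^ (n + 1)).im.eval x) := by
  induction n with
  | zero =>
    rw [zero_add, pow_one]
    simp only [fundamental, eval_add, eval_mul, eval_ofNat, eval_X, eval_C]
    calc 0 < 2 * (2 * x + a) ^ 2 := by positivity
      _ = _ := by ring
  | succ n ih =>
    rw [pow_succ, re_mul_fundamental, im_mul_fundamental]
    generalize fundamental a b ^ (n + 1) = w at ih ⊢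
    simp only [eval_add, eval_mul, eval_ofNat, eval_X, eval_C]
    generalize eval x w.re = p at ih ⊢
    generalize eval x w.im = q at ih ⊢
    generalize eval x (monicQuadratic a b) = D at hD ⊢
    generalize 2 * x + a = L at hL ih ⊢
    have hp : p ≠ 0 := by rintro rfl; simp at ih
    calc 0 < L ^ 2 * (L * (p * q)) + 4 * D * (L * (p * q)) + 2 * L ^ 2 * (p ^ 2 + D * q ^ 2) := by
          positivity
      _ = _ := by ring

theorem eval_im_ne_zero {z : Extension a b} (hz : z.norm = C c) (hc : c ≠ 0) (him : z.im ≠ 0)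
    {x : R} (hD : 0 ≤ (monicQuadratic a b).eval x) (hL : 2 * x + a ≠ 0) : z.im.eval x ≠ 0 := by
  intro h
  obtain ⟨k, l, n, -, hl, hkl, -⟩ := exists_smul_im_eq_smul_im_pow hz hc him
  have heval := congrArg (eval x) hkl
  rw [eval_smul, eval_smul, h, smul_zero] at heval
  have hpos := eval_fundamental_pow_pos hD hL n
  rw [(smul_eq_zero_iff_right hl).mp heval.symm] at hpos
  simp at hpos

end monicQuadratic

end MonicQuadratic

lemma dvd_prime_pow_of_pow_dvd_prime_pow {M : Type*} [CommMonoidWithZero M] [IsCancelMulZero M]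
    {p x : M} (hp : Prime p) {k m n : ℕ} (hmn : m < (k + 1) * n) (h : x ^ n ∣ p ^ m) :
    x ∣ p ^ k := by
  have hn : n ≠ 0 := by
    rintro rfl
    simp at hmn
  obtain ⟨j, -, hj⟩ := (dvd_prime_pow hp m).mp ((dvd_pow_self x hn).trans h)
  have hjn : j * n ≤ m := by
    rw [← pow_dvd_pow_iff hp.ne_zero hp.not_isUnit, pow_mul]
    exact (hj.pow_pow (n := n)).symm.dvd.trans h
  have hjk : j < k + 1 := lt_of_mul_lt_mul_right (hjn.trans_lt hmn) n.zero_le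
  exact hj.dvd.trans (pow_dvd_pow p (Nat.le_of_lt_succ hjk))

lemma dvd_two_iff {b : ℤ} : b ∣ 2 ↔ b = 1 ∨ b = -1 ∨ b = 2 ∨ b = -2 := by
  refine ⟨fun h => ?_, by rintro (rfl | rfl | rfl | rfl) <;> decide⟩
  have h1 := Int.le_of_dvd two_pos h
  have h2 := Int.le_of_dvd two_pos (neg_dvd.mpr h)
  have h3 : b ≠ 0 := by rintro rfl; simp at h
  omega

lemma eq_of_discr_dvd_eight {a b : ℤ} (h : a ^ 2 - 4 * b ∣ 8) (hab : b < 0 ∨ a = 0) :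
    (a = 0 ∧ b ∣ 2) ∨ (a ^ 2 = 4 ∧ b = -1) := by
  rcases eq_or_ne a 0 with rfl | ha
  · left
    refine ⟨rfl, (mul_dvd_mul_iff_left (four_ne_zero (α := ℤ))).mp ?_⟩
    simpa using h
  · right
    have hb : b < 0 := hab.resolve_right ha
    have hle := Int.le_of_dvd (by norm_num) h
    have hpos : 0 < a ^ 2 := by positivity
    have hsq : a ^ 2 ≤ 2 ^ 2 := by linarith
    obtain ⟨ha_ge, ha_le⟩ := abs_le_of_sq_le_sq' hsq zero_le_two
    have hb1 : b = -1 := by omega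
    subst hb1
    interval_cases a <;> revert ha h <;> decide

section Classification

variable {R : Type*} [CommRing R]

lemma IsPellian.exists_norm_eq_C_one [IsDomain R] {p : R[X]} (hp : p ≠ 0) {a b : R}
    (h : IsPellian (p ^ 2 * monicQuadratic a b)) :
    ∃ z : monicQuadratic.Extension a b, z.norm = C 1 ∧ z.im ≠ 0 ∧ p ∣ z.im := by
  obtain ⟨f, g, hg, hfg⟩ := h
  refine ⟨⟨f, p * g⟩, ?_, mul_ne_zero hp hg, dvd_mul_right p g⟩
  rw [QuadraticAlgebra.norm_def, C_1]
  linear_combination hfg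

lemma isPellian_X_sq_mul_monicQuadratic_zero [NeZero (2 : R)] {b : R} (hb : b ∣ 2) :
    IsPellian (X ^ 2 * monicQuadratic 0 b) := by
  obtain ⟨k, hk⟩ := hb
  have hkC : (C b * C k : R[X]) = 2 := by rw [← C_mul, ← hk, C_ofNat]
  refine ⟨C k * X ^ 2 + 1, C k, ?_, ?_⟩
  · rw [Ne, C_eq_zero]
    rintro rfl
    exact two_ne_zero (hk.trans (mul_zero b))
  · rw [monicQuadratic, C_0]
    linear_combination -(C k * X ^ 2) * hkC

lemma isPellian_X_sq_mul_monicQuadratic_neg_one [IsDomain R] [NeZero (2 : R)] {a : R}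
    (ha : a ^ 2 = 4) : IsPellian (X ^ 2 * monicQuadratic a (-1)) := by
  have haC : (C a ^ 2 : R[X]) = 4 := by rw [← C_pow, ha, C_ofNat]
  -- `w = X² + aX + (X + a/2)√D` has norm `1`; the `√D`-component of `w²` is divisible by `X`.
  refine ⟨2 * (X ^ 2 + C a * X) ^ 2 - 1, (X + C a) * (C 2 * X + C a), ?_, ?_⟩
  · refine mul_ne_zero (X_add_C_ne_zero a) (ne_zero_of_natDegree_gt (n := 0) ?_)
    rw [natDegree_linear two_ne_zero]
    exact one_pos
  · rw [monicQuadratic, C_neg, C_1, C_ofNat]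
    linear_combination (X ^ 2 * (X + C a) ^ 2 * (1 - X ^ 2 - C a * X)) * haC

lemma isPellian_X_sq_mul_monicQuadratic_iff {a b : ℤ} :
    IsPellian (X ^ 2 * monicQuadratic a b) ↔ (a = 0 ∧ b ∣ 2) ∨ (a ^ 2 = 4 ∧ b = -1) := by
  refine ⟨fun h => ?_, ?_⟩
  · obtain ⟨z, hnorm, him, hX⟩ := h.exists_norm_eq_C_one X_ne_zero
    have hroot : z.im.eval 0 = 0 := by rwa [← coeff_zero_eq_eval_zero, ← X_dvd_iff]
    have hsign : b < 0 ∨ a = 0 := by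
      by_contra! ⟨hb, ha⟩
      exact monicQuadratic.eval_im_ne_zero hnorm one_ne_zero him
        (by simpa [monicQuadratic] using hb) (by simpa using ha) hroot
    obtain ⟨n, s, hs⟩ := monicQuadratic.exists_sq_mul_discr_pow_eq hnorm one_ne_zero him
    rw [mul_one] at hs
    have hdvd : a ^ 2 - 4 * b ∣ 2 ^ 3 :=
      dvd_prime_pow_of_pow_dvd_prime_pow Int.prime_two (by omega) (Dvd.intro_left _ hs)
    exact eq_of_discr_dvd_eight hdvd hsign
  · rintro (⟨rfl, hb⟩ | ⟨ha, rfl⟩)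
    · exact isPellian_X_sq_mul_monicQuadratic_zero hb
    · exact isPellian_X_sq_mul_monicQuadratic_neg_one ha

lemma X_sq_mul_monicQuadratic_comp_neg_X (a b : R) :
    (X ^ 2 * monicQuadratic a b).comp (-X) = X ^ 2 * monicQuadratic (-a) b := by
  simp [monicQuadratic]

lemma eq_normal_form_iff_exists_monicQuadratic {q : ℤ[X]} :
    (q = X ^ 2 * (X ^ 2 + 1) ∨ q = X ^ 2 * (X ^ 2 - 1) ∨ q = X ^ 2 * (X ^ 2 + 2) ∨
      q = X ^ 2 * (X ^ 2 - 2) ∨ q = X ^ 2 * (X ^ 2 - 2 * X - 1)) ↔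
    ∃ a b : ℤ, ((a = 0 ∧ b ∣ 2) ∨ (a = -2 ∧ b = -1)) ∧ q = X ^ 2 * monicQuadratic a b := by
  simp only [dvd_two_iff, or_and_right, or_assoc, exists_or, and_assoc, exists_and_left,
    exists_eq_left, monicQuadratic, C_0, C_1, C_neg, C_ofNat, zero_mul, add_zero, neg_mul,
    ← sub_eq_add_neg]

end Classification

theorem nonsquarefree_quartic_pellian (d : Polynomial ℤ)
    (hmonic : d.Monic) (hdeg : d.natDegree = 4) (hnsf : ¬ Squarefree d) :
    (∃ f g : Polynomial ℤ, g ≠ 0 ∧ f ^ 2 - d * g ^ 2 = 1) ↔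
    ∃ ε c : ℤ, (ε = 1 ∨ ε = -1) ∧
      (d.comp (C ε * X + C c) = X ^ 2 * (X ^ 2 + 1) ∨
       d.comp (C ε * X + C c) = X ^ 2 * (X ^ 2 - 1) ∨
       d.comp (C ε * X + C c) = X ^ 2 * (X ^ 2 + 2) ∨
       d.comp (C ε * X + C c) = X ^ 2 * (X ^ 2 - 2) ∨
       d.comp (C ε * X + C c) = X ^ 2 * (X ^ 2 - 2 * X - 1)) := by
  simp only [eq_normal_form_iff_exists_monicQuadratic]
  refine ⟨fun hd : IsPellian d => ?_, fun ⟨ε, c, hε, a, b, hab, hcomp⟩ => ?_⟩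
  · obtain ⟨r, a, b, hr⟩ := exists_comp_eq_X_sq_mul_monicQuadratic hmonic hdeg hnsf
      (hd.not_isSquare (by omega))
    have hpell : IsPellian (d.comp (X + C r)) :=
      hd.comp (by rw [natDegree_X_add_C]; exact one_ne_zero)
    rw [hr, isPellian_X_sq_mul_monicQuadratic_iff] at hpell
    have hid : d.comp (C 1 * X + C r) = X ^ 2 * monicQuadratic a b := by rw [C_1, one_mul, hr]
    obtain ⟨rfl, hb⟩ | ⟨ha, rfl⟩ := hpell
    · exact ⟨1, r, .inl rfl, 0, b, .inl ⟨rfl, hb⟩, hid⟩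
    obtain rfl | rfl : a = 2 ∨ a = -2 := sq_eq_sq_iff_eq_or_eq_neg.mp ha
    · refine ⟨-1, r, .inr rfl, -2, -1, .inr ⟨rfl, rfl⟩, ?_⟩
      rw [← X_sq_mul_monicQuadratic_comp_neg_X, ← hr, comp_assoc]
      simp
    · exact ⟨1, r, .inl rfl, -2, -1, .inr ⟨rfl, rfl⟩, hid⟩
  · refine (isPellian_comp_C_mul_X_add_C_iff (Int.isUnit_iff.mpr hε) c).mp ?_
    rw [hcomp, isPellian_X_sq_mul_monicQuadratic_iff]
    exact hab.imp_right fun ⟨ha, hb⟩ => ⟨by rw [ha]; rfl, hb⟩
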